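/- arXiv:1312.1382 — 2 statements merged into one kernel-verified Lean document; each statement's English description precedes it below -/
import Mathlib

section
/- Let G = (V,E) be a finite simple undirected graph on n ≥ 2 vertices with at least one edge and let β > 1 be a real number. If an orientation of G is such that every edge of G is valid, then the maximum out-degree satisfies Δ ≤ β·α(G) + ⌈log_β n⌉. -/
open Finset

structure GraphOrientation {V : Type*} [Fintype V] [DecidableEq V] (G : SimpleGraph V) where
  dir : V → V → Bool
  dir_iff : ∀ u v, G.Adj u v ↔ (dir u v ∨ dir v u)
  asymm : ∀ u v, dir u v → ¬ dir v u

namespace GraphOrientation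
variable {V : Type*} [Fintype V] [DecidableEq V] {G : SimpleGraph V}

/-- The out-degree of `u` under orientation `D`. -/
def outDeg (D : GraphOrientation G) (u : V) : ℕ :=
  (Finset.univ.filter fun v => D.dir u v).card

/-- The maximum out-degree `Δ` of the orientation. -/
def maxOutDeg (D : GraphOrientation G) : ℕ :=
  Finset.univ.sup D.outDeg

/-- The edge oriented `u → v` is valid: `d⁺(u) ≤ d⁺(v) + 1`. -/
def Valid (D : GraphOrientation G) (u v : V) : Prop :=
  D.dir u v ∧ D.outDeg u ≤ D.outDeg v + 1

instance (D : GraphOrientation G) (u : V) : DecidablePred (D.Valid u) := by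
  unfold Valid; infer_instance

end GraphOrientation

/-- The set `E(U)` of edges of `G` with both endpoints in `U`. -/
def edgesIn {V : Type*} [Fintype V] [DecidableEq V] (G : SimpleGraph V)
    [DecidableRel G.Adj] (U : Finset V) : Finset (Sym2 V) :=
  G.edgeFinset ∩ U.sym2

/-- The arboricity `α(G) = max_{U ⊆ V, |U| ≥ 2} ⌈|E(U)|/(|U|-1)⌉`. -/
def arboricity {V : Type*} [Fintype V] [DecidableEq V] (G : SimpleGraph V)
    [DecidableRel G.Adj] : ℕ :=
  Finset.univ.sup fun U : Finset V =>
    if 2 ≤ U.card then ⌈((edgesIn G U).card : ℚ) / ((U.card : ℚ) - 1)⌉₊ else 0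

/-! Let `S t` be the set of vertices of out-degree at least `t`. By validity every edge leaving
`S (t + 1)` stays inside `S t`, so counting these edges by their tails gives
`(t + 1) * #S (t + 1) ≤ #E(S t) ≤ a * #S t`, where `a` is any bound on the density `#E(U) / #U`,
for example the arboricity. While `t + 1 > β * a` the sets therefore grow by a factor of at least
`β` each time `t` decreases by one. As `S Δ` is nonempty and no `S t` has more than `n` elements,
this happens at most `log_β n` times on the way down from `Δ` to `⌊β * a⌋`. -/

section EdgesIn

variable {V : Type*} [Fintype V] [DecidableEq V] {G : SimpleGraph V} [DecidableRel G.Adj]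

theorem mk_mem_edgesIn {U : Finset V} {u v : V} :
    s(u, v) ∈ edgesIn G U ↔ G.Adj u v ∧ u ∈ U ∧ v ∈ U := by
  simp [edgesIn]

theorem edgesIn_eq_empty_of_card_le_one {U : Finset V} (hU : #U ≤ 1) : edgesIn G U = ∅ := by
  refine eq_empty_of_forall_notMem fun e he => ?_
  induction e with
  | _ u v =>
    obtain ⟨hadj, hu, hv⟩ := mk_mem_edgesIn.mp he
    exact hadj.ne (card_le_one.mp hU u hu v hv)

variable (G) in
theorem card_edgesIn_le_arboricity_mul (U : Finset V) :
    #(edgesIn G U) ≤ arboricity G * (#U - 1) := by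
  rcases Nat.lt_or_ge #U 2 with hU | hU
  · simp [edgesIn_eq_empty_of_card_le_one (Nat.le_of_lt_succ hU)]
  have hceil : ⌈(#(edgesIn G U) : ℚ) / ((#U : ℚ) - 1)⌉₊ ≤ arboricity G := by
    have hsup := le_sup (f := fun U : Finset V =>
      if 2 ≤ #U then ⌈(#(edgesIn G U) : ℚ) / ((#U : ℚ) - 1)⌉₊ else 0) (mem_univ U)
    rwa [if_pos hU] at hsup
  have hpos : (0 : ℚ) < #U - 1 := sub_pos.mpr (by exact_mod_cast hU)
  have hdiv := (div_le_iff₀ hpos).mp (Nat.ceil_le.mp hceil)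
  rw [← Nat.cast_pred (by lia)] at hdiv
  exact_mod_cast hdiv

variable (G) in
theorem card_edgesIn_le_arboricity_mul_card (U : Finset V) :
    #(edgesIn G U) ≤ arboricity G * #U :=
  (card_edgesIn_le_arboricity_mul G U).trans (Nat.mul_le_mul_left _ (Nat.sub_le _ _))

end EdgesIn

namespace GraphOrientation

variable {V : Type*} [Fintype V] [DecidableEq V] {G : SimpleGraph V}

theorem adj_of_dir (D : GraphOrientation G) {u v : V} (huv : D.dir u v) : G.Adj u v :=
  (D.dir_iff u v).mpr (Or.inl huv)

theorem sum_outDeg_le_card_edgesIn [DecidableRel G.Adj] (D : GraphOrientation G)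
    {S T : Finset V} (hST : S ⊆ T) (hout : ∀ u ∈ S, ∀ v, D.dir u v → v ∈ T) :
    ∑ u ∈ S, D.outDeg u ≤ #(edgesIn G T) := by
  simp only [outDeg, ← card_sigma]
  refine card_le_card_of_injOn (fun p => s(p.1, p.2)) ?mapsTo ?injOn
  case mapsTo =>
    rintro ⟨u, v⟩ huv
    obtain ⟨hu, huv⟩ : u ∈ S ∧ D.dir u v := by simpa using huv
    exact mk_mem_edgesIn.mpr ⟨D.adj_of_dir huv, hST hu, hout u hu v huv⟩
  case injOn =>
    rintro ⟨u, v⟩ huv ⟨u', v'⟩ huv' heq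
    obtain ⟨-, huv⟩ : u ∈ S ∧ D.dir u v := by simpa using huv
    obtain ⟨-, huv'⟩ : u' ∈ S ∧ D.dir u' v' := by simpa using huv'
    rcases Sym2.eq_iff.mp heq with ⟨rfl, rfl⟩ | ⟨rfl, rfl⟩
    · rfl
    · exact absurd huv' (D.asymm _ _ huv)

/-- The superlevel set `S t = {v | t ≤ d⁺(v)}` of the out-degree, along which the edges are
counted. -/
def superlevel (D : GraphOrientation G) (t : ℕ) : Finset V :=
  {v | t ≤ D.outDeg v}

@[simp]
theorem mem_superlevel {D : GraphOrientation G} {t : ℕ} {v : V} :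
    v ∈ D.superlevel t ↔ t ≤ D.outDeg v := by
  simp [superlevel]

theorem superlevel_antitone (D : GraphOrientation G) : Antitone D.superlevel :=
  fun _ _ hst _ hv => mem_superlevel.mpr (hst.trans (mem_superlevel.mp hv))

theorem superlevel_maxOutDeg_nonempty [Nonempty V] (D : GraphOrientation G) :
    (D.superlevel D.maxOutDeg).Nonempty := by
  obtain ⟨v, -, hv⟩ := exists_mem_eq_sup univ univ_nonempty D.outDeg
  exact ⟨v, mem_superlevel.mpr hv.le⟩

section Valid

variable {D : GraphOrientation G} (hvalid : ∀ u v : V, D.dir u v → D.outDeg u ≤ D.outDeg v + 1)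
include hvalid

theorem mul_card_superlevel_succ_le_card_edgesIn [DecidableRel G.Adj] (t : ℕ) :
    (t + 1) * #(D.superlevel (t + 1)) ≤ #(edgesIn G (D.superlevel t)) :=
  calc (t + 1) * #(D.superlevel (t + 1))
      = #(D.superlevel (t + 1)) • (t + 1) := by rw [smul_eq_mul, mul_comm]
    _ ≤ ∑ u ∈ D.superlevel (t + 1), D.outDeg u :=
        card_nsmul_le_sum _ _ _ fun _ hu => mem_superlevel.mp hu
    _ ≤ #(edgesIn G (D.superlevel t)) := by
        refine D.sum_outDeg_le_card_edgesIn (D.superlevel_antitone t.le_succ) fun u hu v huv => ?_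
        exact mem_superlevel.mpr
          (Nat.le_of_succ_le_succ ((mem_superlevel.mp hu).trans (hvalid u v huv)))

variable [DecidableRel G.Adj] {a β : ℝ} (hdensity : ∀ U : Finset V, #(edgesIn G U) ≤ a * #U)
include hdensity

theorem mul_card_superlevel_succ_le {t : ℕ} (ht : β * a < t + 1) :
    β * #(D.superlevel (t + 1)) ≤ #(D.superlevel t) := by
  rcases (D.superlevel (t + 1)).eq_empty_or_nonempty with hempty | hne
  · simp [hempty]
  have hcount : (t + 1) * (#(D.superlevel (t + 1)) : ℝ) ≤ a * #(D.superlevel t) :=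
    le_trans (by exact_mod_cast mul_card_superlevel_succ_le_card_edgesIn hvalid t) (hdensity _)
  have ha : 0 < a := pos_of_mul_pos_left (lt_of_lt_of_le (by positivity) hcount) (by positivity)
  refine le_of_mul_le_mul_left ?_ ha
  calc a * (β * #(D.superlevel (t + 1)))
      = β * a * #(D.superlevel (t + 1)) := by ring
    _ ≤ (t + 1) * #(D.superlevel (t + 1)) := by gcongr
    _ ≤ a * #(D.superlevel t) := hcount

theorem pow_mul_card_superlevel_add_le (hβ : 0 ≤ β) {t : ℕ} (ht : β * a < t + 1) (k : ℕ) :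
    β ^ k * #(D.superlevel (t + k)) ≤ #(D.superlevel t) := by
  induction k with
  | zero => simp
  | succ k ih =>
    have htk : β * a < (t + k : ℕ) + 1 := by push_cast; linarith [k.cast_nonneg (α := ℝ)]
    calc β ^ (k + 1) * #(D.superlevel (t + k + 1))
        = β ^ k * (β * #(D.superlevel (t + k + 1))) := by ring
      _ ≤ β ^ k * #(D.superlevel (t + k)) := by
          gcongr
          exact mul_card_superlevel_succ_le hvalid hdensity htk
      _ ≤ #(D.superlevel t) := ih

end Valid

end GraphOrientation

open GraphOrientation

theorem max_outDeg_le_of_all_valid_general {V : Type*} [Fintype V] [DecidableEq V] [Nonempty V]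
    (G : SimpleGraph V) [DecidableRel G.Adj] {a β : ℝ} (hβ : 1 < β)
    (hdensity : ∀ U : Finset V, #(edgesIn G U) ≤ a * #U) (D : GraphOrientation G)
    (hvalid : ∀ u v : V, D.dir u v → D.outDeg u ≤ D.outDeg v + 1) :
    (D.maxOutDeg : ℝ) ≤ β * a + Real.logb β (Fintype.card V) := by
  have hn : (1 : ℝ) ≤ Fintype.card V := by exact_mod_cast Fintype.card_pos
  have ha : 0 ≤ a := by
    simpa using (Nat.cast_nonneg _).trans (hdensity {Classical.arbitrary V})
  have hfloor : (⌊β * a⌋₊ : ℝ) ≤ β * a := Nat.floor_le (by positivity)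
  rcases le_total D.maxOutDeg ⌊β * a⌋₊ with hle | hle
  · have hΔ : (D.maxOutDeg : ℝ) ≤ ⌊β * a⌋₊ := by exact_mod_cast hle
    linarith [Real.logb_nonneg hβ hn]
  obtain ⟨k, hk⟩ := Nat.exists_eq_add_of_le hle
  have hpow : β ^ k ≤ Fintype.card V :=
    calc β ^ k ≤ β ^ k * #(D.superlevel D.maxOutDeg) :=
          le_mul_of_one_le_right (by positivity)
            (by exact_mod_cast D.superlevel_maxOutDeg_nonempty.card_pos)
      _ ≤ #(D.superlevel ⌊β * a⌋₊) := by
          rw [hk]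
          exact pow_mul_card_superlevel_add_le hvalid hdensity (by positivity)
            (Nat.lt_floor_add_one _) k
      _ ≤ Fintype.card V := by exact_mod_cast card_le_univ _
  have hlog : (k : ℝ) ≤ Real.logb β (Fintype.card V) := by
    rwa [Real.le_logb_iff_rpow_le hβ (by positivity), Real.rpow_natCast]
  rw [hk, Nat.cast_add]
  exact add_le_add hfloor hlog

/-- If every edge of `G` is valid under the orientation `D`, then
`Δ ≤ β·α(G) + ⌈log_β n⌉` for every real `β > 1`. -/
theorem max_outDeg_le_of_all_valid {V : Type*} [Fintype V] [DecidableEq V]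
    (G : SimpleGraph V) [DecidableRel G.Adj]
    (hn : 2 ≤ Fintype.card V) (hE : G.edgeSet.Nonempty)
    (β : ℝ) (hβ : 1 < β) (D : GraphOrientation G)
    (hvalid : ∀ u v : V, D.dir u v → D.outDeg u ≤ D.outDeg v + 1) :
    (D.maxOutDeg : ℝ) ≤ β * arboricity G + ⌈Real.logb β (Fintype.card V)⌉ := by
  have : Nonempty V := Fintype.card_pos_iff.mp (by lia)
  have hdensity (U : Finset V) : (#(edgesIn G U) : ℝ) ≤ arboricity G * #U := by
    exact_mod_cast card_edgesIn_le_arboricity_mul_card G U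
  exact (max_outDeg_le_of_all_valid_general G hβ hdensity D hvalid).trans
    (by gcongr; exact Int.le_ceil _)
end

section
/- Let D be an orientation of a finite simple graph G in which every edge is valid, let {u,v} ∈ E be an edge oriented u→v in D, let D' be the orientation of G − {u,v} obtained by restricting D, and suppose some edge {v',u}, oriented v'→u in D', is violated in D'. Let D'' be the orientation of G − {u,v} that agrees with D' on all edges except that the edge {v',u} is reoriented as u→v'. Then in D'': the edge u→v' is valid, d⁺_{D''}(u) = d⁺_D(u), d⁺_{D''}(v') = d⁺_{D''}(u), and every violated edge of D'' is oriented into v'. -/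
open Finset

/-!
Reversing `v' → u` restores the out-degree that `u` lost with the edge `u → v`, so from `D` to
`D''` only the out-degree of `v'` changes, dropping by one. Hence an edge of `D''` can be violated
only if it points into `v'`. The violation of `v' → u` in `D'` and its validity in `D` bound the
new out-degree of `v'` from the two sides by that of `u`, which gives equality.
-/

namespace GraphOrientation

variable {V : Type*} [Fintype V] [DecidableEq V] {G H K : SimpleGraph V}
  {D : GraphOrientation G} {D' : GraphOrientation H} {D'' : GraphOrientation K}
  {a b u v w x y : V} {e : Sym2 V}

theorem adj_of_dir_s14 (h : D.dir a b) : G.Adj a b :=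
  (D.dir_iff a b).2 (Or.inl h)

theorem not_dir_of_not_adj (h : ¬ G.Adj a b) : ¬ D.dir a b :=
  mt adj_of_dir_s14 h

/-- Two orientations, possibly of different graphs, have the same arcs away from the pair `e`.
Neither graph need contain `e`, so that deleting an edge and reversing one are both covered. -/
def AgreeOff (D : GraphOrientation G) (D' : GraphOrientation H) (e : Sym2 V) : Prop :=
  ∀ a b, s(a, b) ≠ e → D.dir a b = D'.dir a b

theorem agreeOff_of_deleteEdges_eq (hGH : G.deleteEdges {e} = H.deleteEdges {e})
    (h : ∀ a b, (G.deleteEdges {e}).Adj a b → D.dir a b = D'.dir a b) : AgreeOff D D' e := by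
  intro a b hab
  by_cases hadj : (G.deleteEdges {e}).Adj a b
  · exact h a b hadj
  · have hG : ¬ G.Adj a b := fun hG => hadj (SimpleGraph.deleteEdges_adj.2 ⟨hG, hab⟩)
    have hH : ¬ H.Adj a b := fun hH => hadj (hGH ▸ SimpleGraph.deleteEdges_adj.2 ⟨hH, hab⟩)
    rw [Bool.eq_false_iff.2 (not_dir_of_not_adj hG), Bool.eq_false_iff.2 (not_dir_of_not_adj hH)]

namespace AgreeOff

theorem symm (h : AgreeOff D D' e) : AgreeOff D' D e :=
  fun a b hab => (h a b hab).symm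

theorem swap (h : AgreeOff D D' s(x, y)) : AgreeOff D D' s(y, x) := by
  rwa [Sym2.eq_swap]

theorem dir_of_dir (h : AgreeOff D D' s(x, y)) (hxy : ¬ D.dir x y) (hab : D.dir a b)
    (hb : b ≠ x) : D'.dir a b := by
  have hne : s(a, b) ≠ s(x, y) := by
    rw [Ne, Sym2.eq_iff]
    rintro (⟨rfl, rfl⟩ | ⟨-, rfl⟩)
    exacts [hxy hab, hb rfl]
  rwa [← h a b hne]

theorem outDeg_eq_of_notMem (h : AgreeOff D D' e) (ha : a ∉ e) : D.outDeg a = D'.outDeg a := by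
  have hdir (b : V) : D.dir a b = D'.dir a b :=
    h a b fun hab => ha (hab ▸ Sym2.mem_mk_left a b)
  simp only [outDeg, hdir]

theorem outDeg_eq_of_not_dir (h : AgreeOff D D' s(x, y)) (hD : ¬ D.dir x y)
    (hD' : ¬ D'.dir x y) : D.outDeg x = D'.outDeg x := by
  have hdir (b : V) : D.dir x b = D'.dir x b := by
    by_cases hb : b = y
    · rw [hb, Bool.eq_false_iff.2 hD, Bool.eq_false_iff.2 hD']
    · exact h x b (mt Sym2.congr_right.1 hb)
  simp only [outDeg, hdir]

theorem outDeg_eq_add_one (h : AgreeOff D D' s(x, y)) (hD : D.dir x y) (hD' : ¬ D'.dir x y) :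
    D.outDeg x = D'.outDeg x + 1 := by
  have hinsert :
      univ.filter (fun b => D.dir x b) = insert y (univ.filter fun b => D'.dir x b) := by
    ext b
    by_cases hb : b = y
    · simp [hb, hD]
    · simp [hb, h x b (mt Sym2.congr_right.1 hb)]
  rw [outDeg, outDeg, hinsert, card_insert_of_notMem (by simpa using hD')]

end AgreeOff

/-- `D'` arises from `D` by deleting the arc `x → y` together with its edge. -/
structure DeletesArc (D : GraphOrientation G) (D' : GraphOrientation H) (x y : V) : Prop where
  dir : D.dir x y
  not_adj : ¬ H.Adj x y
  agreeOff : AgreeOff D D' s(x, y)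

namespace DeletesArc

theorem dir_of_dir (h : DeletesArc D D' x y) (hab : D'.dir a b) : D.dir a b := by
  have hne : s(a, b) ≠ s(x, y) := fun he =>
    h.not_adj ((H.adj_congr_of_sym2 he).1 (adj_of_dir_s14 hab))
  rwa [h.agreeOff a b hne]

theorem outDeg_tail (h : DeletesArc D D' x y) : D.outDeg x = D'.outDeg x + 1 :=
  h.agreeOff.outDeg_eq_add_one h.dir (not_dir_of_not_adj h.not_adj)

theorem outDeg_of_ne (h : DeletesArc D D' x y) (ha : a ≠ x) : D.outDeg a = D'.outDeg a := by
  rcases eq_or_ne a y with rfl | hay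
  · exact h.agreeOff.swap.outDeg_eq_of_not_dir (D.asymm x a h.dir)
      (not_dir_of_not_adj fun hadj => h.not_adj hadj.symm)
  · exact h.agreeOff.outDeg_eq_of_notMem (by simp [ha, hay])

end DeletesArc

/-- `D'` arises from `D` by reversing the arc `x → y` to `y → x`. -/
structure ReversesArc (D : GraphOrientation G) (D' : GraphOrientation H) (x y : V) : Prop where
  dir : D.dir x y
  dir_reversed : D'.dir y x
  agreeOff : AgreeOff D D' s(x, y)

namespace ReversesArc

theorem dir_of_dir (h : ReversesArc D D' x y) (hab : D'.dir a b) (hb : b ≠ x) : D.dir a b :=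
  h.agreeOff.symm.dir_of_dir (D'.asymm y x h.dir_reversed) hab hb

theorem outDeg_tail (h : ReversesArc D D' x y) : D.outDeg x = D'.outDeg x + 1 :=
  h.agreeOff.outDeg_eq_add_one h.dir (D'.asymm y x h.dir_reversed)

theorem outDeg_head (h : ReversesArc D D' x y) : D'.outDeg y = D.outDeg y + 1 :=
  h.agreeOff.symm.swap.outDeg_eq_add_one h.dir_reversed (D.asymm x y h.dir)

theorem outDeg_of_ne (h : ReversesArc D D' x y) (hax : a ≠ x) (hay : a ≠ y) :
    D.outDeg a = D'.outDeg a :=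
  h.agreeOff.outDeg_eq_of_notMem (by simp [hax, hay])

end ReversesArc

namespace DeletesArc

theorem outDeg_tail_of_reversesArc (hdel : DeletesArc D D' u v) (hrev : ReversesArc D' D'' w u) :
    D.outDeg w = D''.outDeg w + 1 :=
  (hdel.outDeg_of_ne (adj_of_dir_s14 hrev.dir).ne).trans hrev.outDeg_tail

theorem outDeg_of_reversesArc_of_ne (hdel : DeletesArc D D' u v)
    (hrev : ReversesArc D' D'' w u) (ha : a ≠ w) : D.outDeg a = D''.outDeg a := by
  rcases eq_or_ne a u with rfl | hau
  · exact hdel.outDeg_tail.trans hrev.outDeg_head.symm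
  · exact (hdel.outDeg_of_ne hau).trans (hrev.outDeg_of_ne ha hau)

theorem outDeg_le_of_reversesArc (hdel : DeletesArc D D' u v) (hrev : ReversesArc D' D'' w u)
    (a : V) : D''.outDeg a ≤ D.outDeg a := by
  rcases eq_or_ne a w with rfl | ha
  · exact Nat.le.intro (hdel.outDeg_tail_of_reversesArc hrev).symm
  · exact (hdel.outDeg_of_reversesArc_of_ne hrev ha).ge

theorem valid_of_reversesArc (hdel : DeletesArc D D' u v) (hrev : ReversesArc D' D'' w u)
    (hvalid : ∀ a b, D.dir a b → D.outDeg a ≤ D.outDeg b + 1) (hab : D''.dir a b)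
    (hb : b ≠ w) : D''.outDeg a ≤ D''.outDeg b + 1 :=
  calc
    D''.outDeg a ≤ D.outDeg a := hdel.outDeg_le_of_reversesArc hrev a
    _ ≤ D.outDeg b + 1 := hvalid a b (hdel.dir_of_dir (hrev.dir_of_dir hab hb))
    _ = D''.outDeg b + 1 := by rw [hdel.outDeg_of_reversesArc_of_ne hrev hb]

theorem outDeg_eq_of_reversesArc (hdel : DeletesArc D D' u v) (hrev : ReversesArc D' D'' w u)
    (hvalid : D.outDeg w ≤ D.outDeg u + 1) (hviol : ¬ D'.outDeg w ≤ D'.outDeg u + 1) :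
    D''.outDeg w = D''.outDeg u := by
  have hle : D''.outDeg w ≤ D''.outDeg u := by
    have hw := hdel.outDeg_tail_of_reversesArc hrev
    have hu := hdel.outDeg_of_reversesArc_of_ne hrev (adj_of_dir_s14 hrev.dir).ne'
    omega
  have hge : D''.outDeg u ≤ D''.outDeg w := by
    have hw := hrev.outDeg_tail
    have hu := hrev.outDeg_head
    omega
  exact hle.antisymm hge

end DeletesArc

end GraphOrientation

open GraphOrientation

/-- Delete an edge `{u,v}` oriented `u → v` from a graph all of whose
edges are valid, restricting the orientation to `D'`; suppose the edge `{v',u}`, oriented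
`v' → u`, is violated in `D'`. Let `D''` agree with `D'` except that `{v',u}` is
reoriented as `u → v'`. Then in `D''`: the edge `u → v'` is valid,
`d⁺_{D''}(u) = d⁺_D(u)`, `d⁺_{D''}(v') = d⁺_{D''}(u)`, and every violated edge of `D''`
is oriented into `v'`. -/
theorem delete_flip_valid {V : Type*} [Fintype V] [DecidableEq V]
    (G : SimpleGraph V) (u v : V) (hadj : G.Adj u v)
    (D : GraphOrientation G)
    (hvalid : ∀ a b : V, D.dir a b → D.outDeg a ≤ D.outDeg b + 1)
    (hdir : D.dir u v)
    (D' : GraphOrientation (G.deleteEdges {s(u, v)}))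
    (hagree : ∀ a b : V, (G.deleteEdges {s(u, v)}).Adj a b → D'.dir a b = D.dir a b)
    (v' : V) (hdir' : D'.dir v' u)
    (hviol : ¬ D'.outDeg v' ≤ D'.outDeg u + 1)
    (D'' : GraphOrientation (G.deleteEdges {s(u, v)}))
    (hflip : D''.dir u v')
    (hagree'' : ∀ a b : V, (G.deleteEdges {s(u, v)}).Adj a b → s(a, b) ≠ s(u, v') →
      D''.dir a b = D'.dir a b) :
    D''.outDeg u ≤ D''.outDeg v' + 1 ∧
      D''.outDeg u = D.outDeg u ∧
      D''.outDeg v' = D''.outDeg u ∧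
      ∀ a b : V, D''.dir a b → ¬ D''.outDeg a ≤ D''.outDeg b + 1 → b = v' := by
  have hdel : DeletesArc D D' u v :=
    { dir := hdir
      not_adj := by simp
      agreeOff := (agreeOff_of_deleteEdges_eq (by simp) fun a b hab =>
        hagree a b (by simpa using hab)).symm }
  have hrev : ReversesArc D' D'' v' u :=
    { dir := hdir'
      dir_reversed := hflip
      agreeOff := (agreeOff_of_deleteEdges_eq rfl fun a b hab =>
        have ⟨hadj_ab, hne⟩ := SimpleGraph.deleteEdges_adj.1 hab
        hagree'' a b hadj_ab hne).symm.swap }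
  have hu : D''.outDeg u = D.outDeg u :=
    (hdel.outDeg_of_reversesArc_of_ne hrev (adj_of_dir_s14 hdir').ne').symm
  have hv' : D''.outDeg v' = D''.outDeg u :=
    hdel.outDeg_eq_of_reversesArc hrev (hvalid v' u (hdel.dir_of_dir hdir')) hviol
  exact ⟨hv'.ge.trans (Nat.le_succ _), hu, hv', fun a b hab hviol_ab =>
    not_imp_comm.1 (hdel.valid_of_reversesArc hrev hvalid hab) hviol_ab⟩
end
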